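/- A holomorphic function θ : D → [N⁻, N⁺] on the open unit disc is the transfer function of some one-parametric conservative scattering LSDS with input space N⁻ and output space N⁺ (i.e. θ(z) = zD + zC(I_X − zA)⁻¹zB for some Hilbert space X and operators A, B, C, D with G = [[A, B], [C, D]] unitary) if and only if θ belongs to S⁰(N⁻, N⁺). -/

import Mathlib

open ContinuousLinearMap Metric

noncomputable section

/-- The block operator `[[A, B], [C, D]] : X ⊕ N⁻ → X ⊕ N⁺` (Hilbert space direct sum). -/
def blockOp {X Nm Np : Type*}
    [NormedAddCommGroup X] [InnerProductSpace ℂ X]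
    [NormedAddCommGroup Nm] [InnerProductSpace ℂ Nm]
    [NormedAddCommGroup Np] [InnerProductSpace ℂ Np]
    (A : X →L[ℂ] X) (B : Nm →L[ℂ] X) (C : X →L[ℂ] Np) (D : Nm →L[ℂ] Np) :
    WithLp 2 (X × Nm) →L[ℂ] WithLp 2 (X × Np) :=
  ((WithLp.prodContinuousLinearEquiv 2 ℂ X Np).symm :
      (X × Np) →L[ℂ] WithLp 2 (X × Np)) ∘L
    ((A ∘L ContinuousLinearMap.fst ℂ X Nm + B ∘L ContinuousLinearMap.snd ℂ X Nm).prod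
      (C ∘L ContinuousLinearMap.fst ℂ X Nm + D ∘L ContinuousLinearMap.snd ℂ X Nm)) ∘L
    (WithLp.prodContinuousLinearEquiv 2 ℂ X Nm : WithLp 2 (X × Nm) →L[ℂ] (X × Nm))

/-- A bounded operator between Hilbert spaces is unitary: `G*G = I` and `GG* = I`. -/
def IsUnitaryOp {E F : Type*}
    [NormedAddCommGroup E] [InnerProductSpace ℂ E] [CompleteSpace E]
    [NormedAddCommGroup F] [InnerProductSpace ℂ F] [CompleteSpace F]
    (G : E →L[ℂ] F) : Prop :=
  adjoint G ∘L G = ContinuousLinearMap.id ℂ E ∧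
    G ∘L adjoint G = ContinuousLinearMap.id ℂ F

/-!
Conservation of energy `‖Ax + Bu‖² + ‖Cx + Du‖² = ‖x‖² + ‖u‖²` at the state `x = z (Ax + Bu)`
bounds `θ(z) u = z (Cx + Du)` by `‖u‖`.

Conversely, the Schwarz lemma gives `θ(z) = z φ(z)` with `φ` in the Schur class. Multiplication by
`φ` on the unit circle is a contraction `L : L²(𝕋, N⁻) → L²(𝕋, N⁺)` intertwining the shifts; to
avoid boundary values of `φ`, it is taken as a weak limit of multiplications by `φ(r ζ)`, `r → 1`.
The isometry `f ↦ (L f, (I - L⁎L)^(1/2) f)` couples the two shifts to a unitary `U` on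
`K = L²(𝕋, N⁺) ⊕ L²(𝕋, N⁻)`, in which the constants give orthogonal channels: the images of `N⁺`
under `Uⁿ`, `n ≥ 0`, are orthogonal to those of `N⁻` under `U⁻ⁿ`, `n ≥ 1`. Let `X` be the
orthogonal complement of all of these. Then `X ⊕ N⁺` and `U X ⊕ N⁻` are the same subspace of `K`,
and this identification is the unitary block operator whose transfer function is `z φ(z)`.
-/

open Filter Topology
open scoped InnerProductSpace

section TransferFunction

variable {X Nm Np : Type*}
  [NormedAddCommGroup X] [InnerProductSpace ℂ X]
  [NormedAddCommGroup Nm] [InnerProductSpace ℂ Nm]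
  [NormedAddCommGroup Np] [InnerProductSpace ℂ Np]

/-- The transfer function `z ↦ zD + zC(I - zA)⁻¹zB` of a one-parametric scattering system. Since
`Ring.inverse` is `0` on non-units, it is meaningful only where `1 - z • A` is invertible. -/
def transferFunction (A : X →L[ℂ] X) (B : Nm →L[ℂ] X) (C : X →L[ℂ] Np) (D : Nm →L[ℂ] Np)
    (z : ℂ) : Nm →L[ℂ] Np :=
  z • D + (z • C) ∘L (Ring.inverse (1 - z • A)) ∘L (z • B)

lemma exists_state_transferFunction_apply_eq (A : X →L[ℂ] X) (B : Nm →L[ℂ] X) (C : X →L[ℂ] Np)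
    (D : Nm →L[ℂ] Np) {z : ℂ} (hz : IsUnit (1 - z • A)) (u : Nm) :
    ∃ x : X, x = z • (A x + B u) ∧ transferFunction A B C D z u = z • (C x + D u) := by
  refine ⟨Ring.inverse (1 - z • A) (z • B u), ?_, ?_⟩
  · have hx : (1 - z • A) (Ring.inverse (1 - z • A) (z • B u)) = z • B u :=
      DFunLike.congr_fun (Ring.mul_inverse_cancel _ hz) (z • B u)
    simpa only [_root_.sub_apply, one_apply_eq_self, _root_.smul_apply, sub_eq_iff_eq_add',
      smul_add] using hx
  · simp only [transferFunction, _root_.add_apply, _root_.smul_apply, comp_apply, smul_add,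
      add_comm]

lemma blockOp_toLp (A : X →L[ℂ] X) (B : Nm →L[ℂ] X) (C : X →L[ℂ] Np) (D : Nm →L[ℂ] Np)
    (x : X) (u : Nm) :
    blockOp A B C D (WithLp.toLp 2 (x, u)) = WithLp.toLp 2 (A x + B u, C x + D u) := rfl

lemma exists_blockOp_eq (G : WithLp 2 (X × Nm) →L[ℂ] WithLp 2 (X × Np)) :
    ∃ (A : X →L[ℂ] X) (B : Nm →L[ℂ] X) (C : X →L[ℂ] Np) (D : Nm →L[ℂ] Np),
      blockOp A B C D = G := by
  let G' : X × Nm →L[ℂ] X × Np := (WithLp.prodContinuousLinearEquiv 2 ℂ X Np) ∘L G ∘L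
    (WithLp.prodContinuousLinearEquiv 2 ℂ X Nm).symm
  refine ⟨fst ℂ X Np ∘L G' ∘L inl ℂ X Nm, fst ℂ X Np ∘L G' ∘L inr ℂ X Nm,
    snd ℂ X Np ∘L G' ∘L inl ℂ X Nm, snd ℂ X Np ∘L G' ∘L inr ℂ X Nm, ?_⟩
  ext ⟨x, u⟩ : 1
  have hG : G' (x, u) = G' (x, 0) + G' (0, u) := by simp [← map_add]
  exact congrArg (WithLp.toLp 2) hG.symm

end TransferFunction

section Unitary

variable {E F : Type*}
  [NormedAddCommGroup E] [InnerProductSpace ℂ E] [CompleteSpace E]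
  [NormedAddCommGroup F] [InnerProductSpace ℂ F] [CompleteSpace F]

lemma IsUnitaryOp.norm_map {G : E →L[ℂ] F} (hG : IsUnitaryOp G) (x : E) : ‖G x‖ = ‖x‖ :=
  (norm_map_iff_adjoint_comp_self G).2 hG.1 x

lemma isUnitaryOp_linearIsometryEquiv (G : E ≃ₗᵢ[ℂ] F) :
    IsUnitaryOp (G : E →L[ℂ] F) := by
  constructor <;> ext x <;> simp [LinearIsometryEquiv.adjoint_eq_symm]

end Unitary

lemma norm_smul_le_of_norm_le_one {𝕜 V : Type*} [NormedField 𝕜] [SeminormedAddCommGroup V]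
    [NormedSpace 𝕜 V] {z : 𝕜} (hz : ‖z‖ ≤ 1) (v : V) : ‖z • v‖ ≤ ‖v‖ :=
  (norm_smul_le z v).trans (mul_le_of_le_one_left (norm_nonneg v) hz)

lemma norm_smul_lt_one_of_norm_le_one {𝕜 V : Type*} [NormedField 𝕜] [SeminormedAddCommGroup V]
    [NormedSpace 𝕜 V] {z : 𝕜} (hz : ‖z‖ < 1) {v : V} (hv : ‖v‖ ≤ 1) : ‖z • v‖ < 1 :=
  (norm_smul_le z v).trans_lt ((mul_le_of_le_one_right (norm_nonneg z) hv).trans_lt hz)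

lemma isUnit_one_sub_smul_of_norm_le_one {𝕜 R : Type*} [NormedField 𝕜] [NormedRing R]
    [NormedAlgebra 𝕜 R] [HasSummableGeomSeries R] {a : R} (ha : ‖a‖ ≤ 1) {z : 𝕜} (hz : ‖z‖ < 1) :
    IsUnit (1 - z • a) :=
  isUnit_one_sub_of_norm_lt_one (norm_smul_lt_one_of_norm_le_one hz ha)

section Conservative

variable {X Nm Np : Type*}
  [NormedAddCommGroup X] [InnerProductSpace ℂ X] [CompleteSpace X]
  [NormedAddCommGroup Nm] [InnerProductSpace ℂ Nm] [CompleteSpace Nm]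
  [NormedAddCommGroup Np] [InnerProductSpace ℂ Np] [CompleteSpace Np]
  {A : X →L[ℂ] X} {B : Nm →L[ℂ] X} {C : X →L[ℂ] Np} {D : Nm →L[ℂ] Np}

lemma IsUnitaryOp.norm_sq_add_norm_sq_eq (hG : IsUnitaryOp (blockOp A B C D)) (x : X) (u : Nm) :
    ‖A x + B u‖ ^ 2 + ‖C x + D u‖ ^ 2 = ‖x‖ ^ 2 + ‖u‖ ^ 2 := by
  have h := congrArg (· ^ 2) (hG.norm_map (WithLp.toLp 2 (x, u)))
  simpa only [blockOp_toLp, WithLp.prod_norm_sq_eq_of_L2, WithLp.toLp_fst, WithLp.toLp_snd] using h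

lemma IsUnitaryOp.isUnit_one_sub_smul (hG : IsUnitaryOp (blockOp A B C D)) {z : ℂ}
    (hz : ‖z‖ < 1) : IsUnit (1 - z • A) := by
  refine isUnit_one_sub_smul_of_norm_le_one (opNorm_le_bound _ zero_le_one fun x => ?_) hz
  have h := hG.norm_sq_add_norm_sq_eq x 0
  simp only [map_zero, add_zero, norm_zero] at h
  rw [one_mul]
  exact le_of_sq_le_sq (by nlinarith [sq_nonneg ‖C x‖]) (norm_nonneg x)

lemma IsUnitaryOp.norm_transferFunction_le_one (hG : IsUnitaryOp (blockOp A B C D)) {z : ℂ}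
    (hz : ‖z‖ < 1) : ‖transferFunction A B C D z‖ ≤ 1 := by
  refine opNorm_le_bound _ zero_le_one fun u => ?_
  obtain ⟨x, hx, hθ⟩ :=
    exists_state_transferFunction_apply_eq A B C D (hG.isUnit_one_sub_smul hz) u
  have state_le : ‖x‖ ≤ ‖A x + B u‖ := by
    nth_rewrite 1 [hx]
    exact norm_smul_le_of_norm_le_one hz.le _
  have output_le : ‖C x + D u‖ ≤ ‖u‖ := by
    refine le_of_sq_le_sq ?_ (norm_nonneg u)
    linarith [hG.norm_sq_add_norm_sq_eq x u, pow_le_pow_left₀ (norm_nonneg x) state_le 2]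
  rw [hθ, one_mul]
  exact (norm_smul_le_of_norm_le_one hz.le _).trans output_le

end Conservative

section OrthogonalSum

variable {E F K : Type*}
  [NormedAddCommGroup E] [InnerProductSpace ℂ E]
  [NormedAddCommGroup F] [InnerProductSpace ℂ F]
  [NormedAddCommGroup K] [InnerProductSpace ℂ K]

/-- The isometry `(x, y) ↦ J₁ x + J₂ y` of a Hilbert space direct sum, for isometries `J₁`, `J₂`
with orthogonal ranges. -/
def orthogonalCoprod (J₁ : E →ₗᵢ[ℂ] K) (J₂ : F →ₗᵢ[ℂ] K) (h : ∀ x y, ⟪J₁ x, J₂ y⟫_ℂ = 0) :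
    WithLp 2 (E × F) →ₗᵢ[ℂ] K where
  toLinearMap := J₁.toLinearMap.coprod J₂.toLinearMap ∘ₗ
    (WithLp.linearEquiv 2 ℂ (E × F)).toLinearMap
  norm_map' p := by
    refine (sq_eq_sq₀ (norm_nonneg _) (norm_nonneg p)).1 ?_
    have pythagoras := norm_add_sq_eq_norm_sq_add_norm_sq_of_inner_eq_zero _ _ (h p.fst p.snd)
    rw [WithLp.prod_norm_sq_eq_of_L2, ← J₁.norm_map p.fst, ← J₂.norm_map p.snd]
    simp only [sq]
    exact pythagoras

lemma orthogonalCoprod_apply {J₁ : E →ₗᵢ[ℂ] K} {J₂ : F →ₗᵢ[ℂ] K}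
    (h : ∀ x y, ⟪J₁ x, J₂ y⟫_ℂ = 0) (p : WithLp 2 (E × F)) :
    orthogonalCoprod J₁ J₂ h p = J₁ p.fst + J₂ p.snd := rfl

variable [CompleteSpace F] [CompleteSpace K]

lemma mem_range_orthogonalCoprod_iff {J₁ : E →ₗᵢ[ℂ] K} {J₂ : F →ₗᵢ[ℂ] K}
    (h : ∀ x y, ⟪J₁ x, J₂ y⟫_ℂ = 0) {y : K} :
    y ∈ Set.range (orthogonalCoprod J₁ J₂ h) ↔
      y - J₂ (adjoint J₂.toContinuousLinearMap y) ∈ Set.range J₁ := by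
  constructor
  · rintro ⟨p, rfl⟩
    have adjoint_eq : adjoint J₂.toContinuousLinearMap (J₁ p.fst + J₂ p.snd) = p.snd :=
      ext_inner_right ℂ fun v => by
        rw [adjoint_inner_left, LinearIsometry.coe_toContinuousLinearMap, inner_add_left, h,
          zero_add, J₂.inner_map_map]
    refine ⟨p.fst, ?_⟩
    rw [orthogonalCoprod_apply, adjoint_eq, add_sub_cancel_right]
  · rintro ⟨x, hx⟩
    exact ⟨WithLp.toLp 2 (x, adjoint J₂.toContinuousLinearMap y), by
      rw [orthogonalCoprod_apply, WithLp.toLp_fst, WithLp.toLp_snd, hx, sub_add_cancel]⟩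

end OrthogonalSum

section ForwardOrthogonal

variable {K : Type*} [NormedAddCommGroup K] [InnerProductSpace ℂ K]

/-- The positive powers of `U` carry the family `v` into vectors orthogonal to the family `w`.
For `v = w` this says that the family is wandering for `U`. -/
def ForwardOrthogonal {ι κ : Type*} (U : K ≃ₗᵢ[ℂ] K) (v : ι → K) (w : κ → K) : Prop :=
  ∀ (n : ℕ) (a : ι) (b : κ), ⟪(U ^ (n + 1)) (v a), w b⟫_ℂ = 0

lemma mem_orthogonal_span_iff {s : Set K} {x : K} :
    x ∈ (Submodule.span ℂ s)ᗮ ↔ ∀ y ∈ s, ⟪y, x⟫_ℂ = 0 := by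
  rw [← Submodule.span_singleton_le_iff_mem, ← Submodule.isOrtho_iff_le, Submodule.isOrtho_comm,
    Submodule.isOrtho_span]
  simp only [Set.mem_singleton_iff, forall_eq]

lemma exists_equiv_of_range_eq {E F : Type*} [NormedAddCommGroup E] [InnerProductSpace ℂ E]
    [NormedAddCommGroup F] [InnerProductSpace ℂ F] {J₁ : E →ₗᵢ[ℂ] K} {J₂ : F →ₗᵢ[ℂ] K}
    (h : Set.range J₁ = Set.range J₂) : ∃ G : F ≃ₗᵢ[ℂ] E, ∀ y, J₁ (G y) = J₂ y := by
  have range_eq : J₁.range = J₂.range := SetLike.coe_injective h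
  refine ⟨(J₂.equivRange.trans (LinearIsometryEquiv.ofEq _ _ range_eq.symm)).trans
    J₁.equivRange.symm, fun y => ?_⟩
  exact congrArg Subtype.val
    (J₁.equivRange.apply_symm_apply (LinearIsometryEquiv.ofEq _ _ range_eq.symm (J₂.equivRange y)))

lemma pow_apply_of_intertwining {H : Type*} [NormedAddCommGroup H] [InnerProductSpace ℂ H]
    {U : K ≃ₗᵢ[ℂ] K} {V : H ≃ₗᵢ[ℂ] H} {J : H → K} (h : ∀ x, U (J x) = J (V x)) (n : ℕ) (x : H) :
    (U ^ n) (J x) = J ((V ^ n) x) := by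
  induction n generalizing x with
  | zero => rfl
  | succ n ih =>
    rw [pow_succ, pow_succ, LinearIsometryEquiv.coe_mul, LinearIsometryEquiv.coe_mul,
      Function.comp_apply, Function.comp_apply, h, ih]

variable [CompleteSpace K]

lemma isUnit_one_sub_smul_linearIsometryEquiv (U : K ≃ₗᵢ[ℂ] K) {z : ℂ} (hz : ‖z‖ < 1) :
    IsUnit (1 - z • (U : K →L[ℂ] K)) :=
  isUnit_one_sub_smul_of_norm_le_one U.toLinearIsometry.norm_toContinuousLinearMap_le hz

lemma inner_inverse_one_sub_smul_apply (U : K ≃ₗᵢ[ℂ] K) {z : ℂ} (hz : ‖z‖ < 1) {x y : K}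
    (h : ∀ n : ℕ, ⟪x, (U ^ (n + 1)) y⟫_ℂ = 0) :
    ⟪x, Ring.inverse (1 - z • (U : K →L[ℂ] K)) y⟫_ℂ = ⟪x, y⟫_ℂ := by
  have norm_lt : ‖z • (U : K →L[ℂ] K)‖ < 1 :=
    norm_smul_lt_one_of_norm_le_one hz U.toLinearIsometry.norm_toContinuousLinearMap_le
  have coe_pow (n : ℕ) : (U : K →L[ℂ] K) ^ n = ((U ^ n : K ≃ₗᵢ[ℂ] K) : K →L[ℂ] K) := by
    induction n with
    | zero => rfl
    | succ n ih => rw [pow_succ, ih, pow_succ]; rfl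
  have neumann := ((innerSL ℂ x).comp (ContinuousLinearMap.apply ℂ K y)).hasSum
    (hasSum_geom_series_inverse (z • (U : K →L[ℂ] K)) norm_lt)
  refine neumann.unique ?_
  convert hasSum_single 0 fun n hn => ?_
  · simp
  · obtain ⟨n, rfl⟩ := Nat.exists_eq_succ_of_ne_zero hn
    rw [smul_pow, coe_pow]
    change ⟪x, z ^ (n + 1) • (U ^ (n + 1)) y⟫_ℂ = 0
    rw [inner_smul_right, h, mul_zero]

end ForwardOrthogonal

/-- A Lax–Phillips scattering system: a unitary `U` on `K` with isometrically embedded wandering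
input and output spaces such that the future `U ^ (n + 1)` of the output space is orthogonal to the
input space. -/
structure ScatteringSystem (Nm Np K : Type*)
    [NormedAddCommGroup Nm] [InnerProductSpace ℂ Nm]
    [NormedAddCommGroup Np] [InnerProductSpace ℂ Np]
    [NormedAddCommGroup K] [InnerProductSpace ℂ K] where
  U : K ≃ₗᵢ[ℂ] K
  incoming : Nm →ₗᵢ[ℂ] K
  outgoing : Np →ₗᵢ[ℂ] K
  incoming_wandering : ForwardOrthogonal U incoming incoming
  outgoing_wandering : ForwardOrthogonal U outgoing outgoing
  causal : ForwardOrthogonal U outgoing incoming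

namespace ScatteringSystem

variable {Nm Np K : Type*}
  [NormedAddCommGroup Nm] [InnerProductSpace ℂ Nm]
  [NormedAddCommGroup Np] [InnerProductSpace ℂ Np]
  [NormedAddCommGroup K] [InnerProductSpace ℂ K]
  (S : ScatteringSystem Nm Np K)

/-- The internal state space: the orthogonal complement of the future of the output space and the
past of the input space. -/
def stateSpace : Submodule ℂ K :=
  (Submodule.span ℂ ({y | ∃ (n : ℕ) (a : Np), (S.U ^ n) (S.outgoing a) = y} ∪
    {y | ∃ (n : ℕ) (b : Nm), (S.U ^ (n + 1)) y = S.incoming b}))ᗮ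

variable {S} in
lemma mem_stateSpace_iff {x : K} : x ∈ S.stateSpace ↔
    (∀ n a, ⟪(S.U ^ n) (S.outgoing a), x⟫_ℂ = 0) ∧
      ∀ n b, ⟪S.incoming b, (S.U ^ (n + 1)) x⟫_ℂ = 0 := by
  simp only [stateSpace, mem_orthogonal_span_iff, Set.mem_union, Set.mem_ofPred_eq, or_imp,
    forall_and, forall_exists_index]
  refine and_congr ⟨fun h n a => h _ n a rfl, fun h y n a hy => hy ▸ h n a⟩
    ⟨fun h n b => ?_, fun h y n b hy => ?_⟩
  · have past := h ((S.U ^ (n + 1)).symm (S.incoming b)) n b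
      (LinearIsometryEquiv.apply_symm_apply ..)
    rwa [← (S.U ^ (n + 1)).inner_map_map, LinearIsometryEquiv.apply_symm_apply] at past
  · simpa only [← hy, LinearIsometryEquiv.inner_map_map] using h n b

instance [CompleteSpace K] : CompleteSpace S.stateSpace := by
  unfold stateSpace; infer_instance

lemma inner_subtype_stateSpace_outgoing (x : S.stateSpace) (a : Np) :
    ⟪S.stateSpace.subtypeₗᵢ x, S.outgoing a⟫_ℂ = 0 :=
  inner_eq_zero_symm.1 ((mem_stateSpace_iff.1 x.2).1 0 a)

lemma inner_map_stateSpace_incoming (x : S.stateSpace) (b : Nm) :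
    ⟪(S.U.toLinearIsometry.comp S.stateSpace.subtypeₗᵢ) x, S.incoming b⟫_ℂ = 0 :=
  inner_eq_zero_symm.1 ((mem_stateSpace_iff.1 x.2).2 0 b)

/-- `(x, a) ↦ x + v a`, where `v` embeds the output space. -/
def outgoingCoprod : WithLp 2 (S.stateSpace × Np) →ₗᵢ[ℂ] K :=
  orthogonalCoprod S.stateSpace.subtypeₗᵢ S.outgoing S.inner_subtype_stateSpace_outgoing

/-- `(x, b) ↦ U x + w b`, where `w` embeds the input space. -/
def incomingCoprod : WithLp 2 (S.stateSpace × Nm) →ₗᵢ[ℂ] K :=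
  orthogonalCoprod (S.U.toLinearIsometry.comp S.stateSpace.subtypeₗᵢ) S.incoming
    S.inner_map_stateSpace_incoming

variable [CompleteSpace K]

variable {S} in
lemma mem_range_outgoingCoprod_iff [CompleteSpace Np] {y : K} :
    y ∈ Set.range S.outgoingCoprod ↔ (∀ n a, ⟪(S.U ^ (n + 1)) (S.outgoing a), y⟫_ℂ = 0) ∧
      ∀ n b, ⟪S.incoming b, (S.U ^ (n + 1)) y⟫_ℂ = 0 := by
  set c := adjoint S.outgoing.toContinuousLinearMap y with hc
  have inner_incoming (n : ℕ) (b : Nm) : ⟪S.incoming b, (S.U ^ (n + 1)) (S.outgoing c)⟫_ℂ = 0 :=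
    inner_eq_zero_symm.1 (S.causal n c b)
  have inner_outgoing (a : Np) : ⟪S.outgoing a, S.outgoing c⟫_ℂ = ⟪S.outgoing a, y⟫_ℂ := by
    rw [S.outgoing.inner_map_map, hc, adjoint_inner_right]; rfl
  have range_subtype : Set.range S.stateSpace.subtypeₗᵢ = S.stateSpace := Subtype.range_coe
  rw [outgoingCoprod, mem_range_orthogonalCoprod_iff, range_subtype, SetLike.mem_coe,
    mem_stateSpace_iff]
  refine and_congr ⟨fun h n a => ?_, fun h n a => ?_⟩ ?_
  · have future := h (n + 1) a
    rwa [inner_sub_right, S.outgoing_wandering n a c, sub_zero] at future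
  · rcases n with _ | n
    · rw [pow_zero, LinearIsometryEquiv.coe_one, id_eq, inner_sub_right, inner_outgoing, sub_self]
    · rw [inner_sub_right, S.outgoing_wandering n a c, sub_zero, h]
  · simp only [map_sub, inner_sub_right, inner_incoming, sub_zero, ← hc]

variable {S} in
lemma mem_range_incomingCoprod_iff [CompleteSpace Nm] {y : K} :
    y ∈ Set.range S.incomingCoprod ↔ (∀ n a, ⟪(S.U ^ (n + 1)) (S.outgoing a), y⟫_ℂ = 0) ∧
      ∀ n b, ⟪S.incoming b, (S.U ^ (n + 1)) y⟫_ℂ = 0 := by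
  set c := adjoint S.incoming.toContinuousLinearMap y with hc
  have inner_incoming (b : Nm) : ⟪S.incoming b, S.incoming c⟫_ℂ = ⟪S.incoming b, y⟫_ℂ := by
    rw [S.incoming.inner_map_map, hc, adjoint_inner_right]; rfl
  have wandering (n : ℕ) (b : Nm) : ⟪S.incoming b, (S.U ^ (n + 1)) (S.incoming c)⟫_ℂ = 0 :=
    inner_eq_zero_symm.1 (S.incoming_wandering n c b)
  have range_comp (x : K) : x ∈ Set.range (S.U.toLinearIsometry.comp S.stateSpace.subtypeₗᵢ) ↔
      S.U.symm x ∈ S.stateSpace :=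
    ⟨by rintro ⟨x, rfl⟩; simp, fun h => ⟨⟨_, h⟩, by simp⟩⟩
  have inner_outgoing (n : ℕ) (a : Np) (x : K) : ⟪(S.U ^ n) (S.outgoing a), S.U.symm x⟫_ℂ =
      ⟪(S.U ^ (n + 1)) (S.outgoing a), x⟫_ℂ := by
    rw [← S.U.inner_map_map, S.U.apply_symm_apply, pow_succ']; rfl
  have pow_symm (n : ℕ) (x : K) : (S.U ^ (n + 1)) (S.U.symm x) = (S.U ^ n) x := by
    rw [pow_succ, LinearIsometryEquiv.coe_mul, Function.comp_apply, S.U.apply_symm_apply]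
  rw [incomingCoprod, mem_range_orthogonalCoprod_iff, range_comp, mem_stateSpace_iff]
  simp only [inner_outgoing, pow_symm, ← hc]
  refine and_congr ?_ ⟨fun h n b => ?_, fun h n b => ?_⟩
  · simp only [inner_sub_right, S.causal _ _ c, sub_zero]
  · simpa only [map_sub, inner_sub_right, wandering, sub_zero] using h (n + 1) b
  · rcases n with _ | n
    · rw [pow_zero, LinearIsometryEquiv.coe_one, id_eq, inner_sub_right, inner_incoming, sub_self]
    · rw [map_sub, inner_sub_right, wandering, sub_zero, h]

lemma range_outgoingCoprod_eq_range_incomingCoprod [CompleteSpace Nm] [CompleteSpace Np] :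
    Set.range S.outgoingCoprod = Set.range S.incomingCoprod := by
  ext y
  rw [mem_range_outgoingCoprod_iff, mem_range_incomingCoprod_iff]

/-- The scattering function `z ↦ v⁎ (I - z U)⁻¹ w`, with `v` and `w` the embeddings of the output
and input spaces; it is meaningful for `‖z‖ < 1`. -/
def scatteringFunction [CompleteSpace Np] (z : ℂ) : Nm →L[ℂ] Np :=
  adjoint S.outgoing.toContinuousLinearMap ∘L Ring.inverse (1 - z • (S.U : K →L[ℂ] K)) ∘L
    S.incoming.toContinuousLinearMap

variable {S} in
lemma transferFunction_eq_smul_scatteringFunction [CompleteSpace Np]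
    {A : S.stateSpace →L[ℂ] S.stateSpace} {B : Nm →L[ℂ] S.stateSpace}
    {C : S.stateSpace →L[ℂ] Np} {D : Nm →L[ℂ] Np}
    (hG : ∀ (x : S.stateSpace) (u : Nm),
      S.U x + S.incoming u = (A x + B u : S.stateSpace) + S.outgoing (C x + D u))
    {z : ℂ} (hz : ‖z‖ < 1) (hA : IsUnit (1 - z • A)) :
    transferFunction A B C D z = z • S.scatteringFunction z := by
  ext u : 1
  obtain ⟨x, hx, hθ⟩ := exists_state_transferFunction_apply_eq A B C D hA u
  set p := C x + D u
  set R := Ring.inverse (1 - z • (S.U : K →L[ℂ] K))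
  have one_sub_apply : (1 - z • (S.U : K →L[ℂ] K)) x = z • S.incoming u - z • S.outgoing p := by
    have hx' : (x : K) = z • (A x + B u : S.stateSpace) := congrArg Subtype.val hx
    change (x : K) - z • S.U x = _
    rw [eq_sub_of_add_eq (hG x u).symm] at hx'
    nth_rewrite 1 [hx']
    module
  have state_eq : (x : K) = z • R (S.incoming u) - z • R (S.outgoing p) := by
    have unit := isUnit_one_sub_smul_linearIsometryEquiv S.U hz
    rw [← R.map_smul, ← R.map_smul, ← R.map_sub, ← one_sub_apply]
    exact (DFunLike.congr_fun (Ring.inverse_mul_cancel _ unit) (x : K)).symm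
  refine ext_inner_left ℂ fun a => ?_
  have output_eq : ⟪S.outgoing a, R (S.outgoing p)⟫_ℂ = ⟪a, p⟫_ℂ := by
    rw [inner_inverse_one_sub_smul_apply S.U hz fun n =>
      inner_eq_zero_symm.1 (S.outgoing_wandering n p a), S.outgoing.inner_map_map]
  have state_orthogonal := inner_eq_zero_symm.1 (S.inner_subtype_stateSpace_outgoing x a)
  change ⟪S.outgoing a, (x : K)⟫_ℂ = 0 at state_orthogonal
  rw [state_eq, inner_sub_right, inner_smul_right, inner_smul_right, output_eq, sub_eq_zero]
    at state_orthogonal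
  change _ = ⟪a, z • adjoint S.outgoing.toContinuousLinearMap (R (S.incoming u))⟫_ℂ
  rw [hθ, inner_smul_right, inner_smul_right, adjoint_inner_right,
    LinearIsometry.coe_toContinuousLinearMap, state_orthogonal]

theorem exists_conservative_realization [CompleteSpace Nm] [CompleteSpace Np] :
    ∃ (A : S.stateSpace →L[ℂ] S.stateSpace) (B : Nm →L[ℂ] S.stateSpace)
      (C : S.stateSpace →L[ℂ] Np) (D : Nm →L[ℂ] Np), IsUnitaryOp (blockOp A B C D) ∧
        ∀ z : ℂ, ‖z‖ < 1 → transferFunction A B C D z = z • S.scatteringFunction z := by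
  obtain ⟨G, hG⟩ := exists_equiv_of_range_eq S.range_outgoingCoprod_eq_range_incomingCoprod
  obtain ⟨A, B, C, D, hABCD⟩ := exists_blockOp_eq (
    G : WithLp 2 (S.stateSpace × Nm) →L[ℂ] WithLp 2 (S.stateSpace × Np))
  have unitary : IsUnitaryOp (blockOp A B C D) := hABCD ▸ isUnitaryOp_linearIsometryEquiv G
  refine ⟨A, B, C, D, unitary, fun z hz =>
    transferFunction_eq_smul_scatteringFunction (fun x u => ?_) hz (unitary.isUnit_one_sub_smul hz)⟩
  have G_apply : G (WithLp.toLp 2 (x, u)) = WithLp.toLp 2 (A x + B u, C x + D u) :=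
    (DFunLike.congr_fun hABCD _).symm
  have h := hG (WithLp.toLp 2 (x, u))
  rw [G_apply] at h
  exact h.symm

end ScatteringSystem

section Coupling

variable {E F : Type*}
  [NormedAddCommGroup E] [InnerProductSpace ℂ E]
  [NormedAddCommGroup F] [InnerProductSpace ℂ F]

/-- The isometry `x ↦ (L x, Q x)` into a Hilbert space direct sum. -/
def isometricPair {G : Type*} [NormedAddCommGroup G] [InnerProductSpace ℂ G] (L : E →L[ℂ] F)
    (Q : E →L[ℂ] G) (h : ∀ x, ‖L x‖ ^ 2 + ‖Q x‖ ^ 2 = ‖x‖ ^ 2) :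
    E →ₗᵢ[ℂ] WithLp 2 (F × G) where
  toLinearMap := (WithLp.linearEquiv 2 ℂ (F × G)).symm ∘ₗ (L.prod Q).toLinearMap
  norm_map' x := by
    refine (sq_eq_sq₀ (norm_nonneg _) (norm_nonneg x)).1 ?_
    rw [WithLp.prod_norm_sq_eq_of_L2, ← h x]
    rfl

lemma isometricPair_apply {G : Type*} [NormedAddCommGroup G] [InnerProductSpace ℂ G]
    {L : E →L[ℂ] F} {Q : E →L[ℂ] G} (h : ∀ x, ‖L x‖ ^ 2 + ‖Q x‖ ^ 2 = ‖x‖ ^ 2) (x : E) :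
    isometricPair L Q h x = WithLp.toLp 2 (L x, Q x) := rfl

/-- The direct sum of two unitaries on the Hilbert space direct sum. -/
def unitaryProd (U : F ≃ₗᵢ[ℂ] F) (V : E ≃ₗᵢ[ℂ] E) :
    WithLp 2 (F × E) ≃ₗᵢ[ℂ] WithLp 2 (F × E) where
  toLinearEquiv := (WithLp.linearEquiv 2 ℂ (F × E)).trans
    ((U.toLinearEquiv.prodCongr V.toLinearEquiv).trans (WithLp.linearEquiv 2 ℂ (F × E)).symm)
  norm_map' p := by
    refine (sq_eq_sq₀ (norm_nonneg _) (norm_nonneg p)).1 ?_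
    rw [WithLp.prod_norm_sq_eq_of_L2, WithLp.prod_norm_sq_eq_of_L2, ← U.norm_map p.fst,
      ← V.norm_map p.snd]
    rfl

lemma unitaryProd_toLp (U : F ≃ₗᵢ[ℂ] F) (V : E ≃ₗᵢ[ℂ] E) (y : F) (x : E) :
    unitaryProd U V (WithLp.toLp 2 (y, x)) = WithLp.toLp 2 (U y, V x) := rfl

variable [CompleteSpace E] [CompleteSpace F]

/-- The defect operator `(I - L⁎L)^(1/2)` of a contraction `L`. -/
def defectOperator (L : E →L[ℂ] F) : E →L[ℂ] E := CFC.sqrt (1 - adjoint L ∘L L)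

lemma norm_sq_add_norm_defectOperator_sq {L : E →L[ℂ] F} (hL : ‖L‖ ≤ 1) (x : E) :
    ‖L x‖ ^ 2 + ‖defectOperator L x‖ ^ 2 = ‖x‖ ^ 2 := by
  have adjoint_comp_nonneg : 0 ≤ adjoint L ∘L L :=
    (nonneg_iff_isPositive _).2 (isPositive_adjoint_comp_self L)
  have adjoint_comp_le_one : adjoint L ∘L L ≤ 1 :=
    (CStarAlgebra.norm_le_one_iff_of_nonneg _).1 <| by
      rw [norm_adjoint_comp_self]
      exact mul_le_one₀ hL (norm_nonneg L) hL
  have self_adjoint : adjoint (defectOperator L) = defectOperator L :=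
    (IsSelfAdjoint.of_nonneg (CFC.sqrt_nonneg _)).star_eq
  have sq_eq : defectOperator L (defectOperator L x) = x - adjoint L (L x) :=
    DFunLike.congr_fun (CFC.sqrt_mul_sqrt_self _ (sub_nonneg.2 adjoint_comp_le_one)) x
  rw [norm_sq_eq_re_inner (𝕜 := ℂ) (L x), norm_sq_eq_re_inner (𝕜 := ℂ) (defectOperator L x),
    norm_sq_eq_re_inner (𝕜 := ℂ) x, ← adjoint_inner_left L, ← adjoint_inner_left (defectOperator L),
    self_adjoint, sq_eq, inner_sub_left, map_sub, add_sub_cancel]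

lemma defectOperator_map_of_intertwining {L : E →L[ℂ] F} {U : E ≃ₗᵢ[ℂ] E} {V : F ≃ₗᵢ[ℂ] F}
    (h : ∀ x, L (U x) = V (L x)) (x : E) :
    defectOperator L (U x) = U (defectOperator L x) := by
  have commute_gram : Commute (adjoint L ∘L L) (U : E →L[ℂ] E) := by
    ext x
    refine ext_inner_right ℂ fun y => ?_
    obtain ⟨y, rfl⟩ := U.surjective y
    change ⟪adjoint L (L (U x)), U y⟫_ℂ = ⟪U (adjoint L (L x)), U y⟫_ℂ
    rw [adjoint_inner_left, h, h, V.inner_map_map, U.inner_map_map, adjoint_inner_left]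
  have commute_defect : Commute (defectOperator L) (U : E →L[ℂ] E) :=
    ((Commute.one_left (U : E →L[ℂ] E)).sub_left commute_gram).cfcₙ_nnreal _
  exact DFunLike.congr_fun commute_defect.eq x

lemma inverse_one_sub_smul_intertwining {U : E ≃ₗᵢ[ℂ] E} {V : F ≃ₗᵢ[ℂ] F} {W : E →L[ℂ] F}
    (h : ∀ x, W (U x) = V (W x)) {z : ℂ} (hz : ‖z‖ < 1) (x : E) :
    Ring.inverse (1 - z • (V : F →L[ℂ] F)) (W x) =
      W (Ring.inverse (1 - z • (U : E →L[ℂ] E)) x) := by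
  have left_inverse := DFunLike.congr_fun
    (Ring.inverse_mul_cancel _ (isUnit_one_sub_smul_linearIsometryEquiv V hz))
  have right_inverse := DFunLike.congr_fun
    (Ring.mul_inverse_cancel _ (isUnit_one_sub_smul_linearIsometryEquiv U hz)) x
  set y := Ring.inverse (1 - z • (U : E →L[ℂ] E)) x
  have one_sub_apply : W x = (1 - z • (V : F →L[ℂ] F)) (W y) := by
    have x_eq : y - z • U y = x := right_inverse
    change W x = W y - z • V (W y)
    rw [← x_eq, map_sub, map_smul, h]
  rw [one_sub_apply]
  exact left_inverse (W y)

theorem exists_scatteringSystem_of_contraction {Nm Np : Type*}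
    [NormedAddCommGroup Nm] [InnerProductSpace ℂ Nm]
    [NormedAddCommGroup Np] [InnerProductSpace ℂ Np] [CompleteSpace Np]
    {U : E ≃ₗᵢ[ℂ] E} {V : F ≃ₗᵢ[ℂ] F} {L : E →L[ℂ] F} (hL : ‖L‖ ≤ 1)
    (hLU : ∀ x, L (U x) = V (L x)) {cE : Nm →ₗᵢ[ℂ] E} {cF : Np →ₗᵢ[ℂ] F}
    (hE : ForwardOrthogonal U cE cE) (hF : ForwardOrthogonal V cF cF)
    (hFE : ForwardOrthogonal V cF (L ∘ cE)) :
    ∃ S : ScatteringSystem Nm Np (WithLp 2 (F × E)), ∀ z : ℂ, ‖z‖ < 1 → ∀ a b,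
      ⟪a, S.scatteringFunction z b⟫_ℂ =
        ⟪cF a, L (Ring.inverse (1 - z • (U : E →L[ℂ] E)) (cE b))⟫_ℂ := by
  let J : F →ₗᵢ[ℂ] WithLp 2 (F × E) := isometricPair (.id ℂ F) 0 (by simp)
  let W : E →ₗᵢ[ℂ] WithLp 2 (F × E) :=
    isometricPair L (defectOperator L) (norm_sq_add_norm_defectOperator_sq hL)
  have pow_J : ∀ (n : ℕ) (y : F), (unitaryProd V U ^ n) (J y) = J ((V ^ n) y) :=
    pow_apply_of_intertwining fun y => by
      simp only [J, isometricPair_apply, unitaryProd_toLp, zero_apply, map_zero, id_apply]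
  have map_W (x : E) : W (U x) = unitaryProd V U (W x) := by
    simp only [W, isometricPair_apply, unitaryProd_toLp, hLU,
      defectOperator_map_of_intertwining hLU]
  have pow_W : ∀ (n : ℕ) (x : E), (unitaryProd V U ^ n) (W x) = W ((U ^ n) x) :=
    pow_apply_of_intertwining fun x => (map_W x).symm
  have inner_J_W (y : F) (x : E) : ⟪J y, W x⟫_ℂ = ⟪y, L x⟫_ℂ := by
    simp only [J, W, isometricPair_apply, WithLp.prod_inner_apply, zero_apply, inner_zero_left,
      add_zero, id_apply]
  refine ⟨⟨unitaryProd V U, W.comp cE, J.comp cF, fun n a b => ?_, fun n a b => ?_,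
    fun n a b => ?_⟩, fun z hz a b => ?_⟩
  · rw [LinearIsometry.coe_comp, Function.comp_apply, Function.comp_apply, pow_W,
      W.inner_map_map, hE]
  · rw [LinearIsometry.coe_comp, Function.comp_apply, Function.comp_apply, pow_J,
      J.inner_map_map, hF]
  · rw [LinearIsometry.coe_comp, LinearIsometry.coe_comp, Function.comp_apply,
      Function.comp_apply, pow_J, inner_J_W]
    exact hFE n a b
  · rw [← inner_J_W, ScatteringSystem.scatteringFunction, comp_apply, adjoint_inner_right]
    exact congrArg _ (inverse_one_sub_smul_intertwining (W := W.toContinuousLinearMap) map_W hz _)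

end Coupling

section WeakLimit

lemma exists_tendsto_inner_of_norm_le {ι E F : Type*}
    [NormedAddCommGroup E] [InnerProductSpace ℂ E]
    [NormedAddCommGroup F] [InnerProductSpace ℂ F] [CompleteSpace F]
    (l : Ultrafilter ι) {M : ι → E →L[ℂ] F} {r : ℝ} (hM : ∀ i, ‖M i‖ ≤ r) :
    ∃ L : E →L[ℂ] F, ‖L‖ ≤ r ∧ ∀ x y, Tendsto (fun i => ⟪M i x, y⟫_ℂ) l (𝓝 ⟪L x, y⟫_ℂ) := by
  have r_nonneg : 0 ≤ r :=
    let ⟨i⟩ := l.neBot.nonempty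
    (norm_nonneg _).trans (hM i)
  have norm_inner_le (i : ι) (x : E) (y : F) : ‖⟪M i x, y⟫_ℂ‖ ≤ r * ‖x‖ * ‖y‖ :=
    (norm_inner_le_norm _ _).trans (by gcongr; exact (M i).le_of_opNorm_le (hM i) x)
  have exists_limit (x : E) (y : F) : ∃ c : ℂ, ‖c‖ ≤ r * ‖x‖ * ‖y‖ ∧
      Tendsto (fun i => ⟪M i x, y⟫_ℂ) l (𝓝 c) := by
    obtain ⟨c, hc, limit⟩ := (isCompact_closedBall (0 : ℂ) (r * ‖x‖ * ‖y‖)).ultrafilter_le_nhds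
      (l.map fun i => ⟪M i x, y⟫_ℂ)
      (tendsto_principal.2 (.of_forall fun i => mem_closedBall_zero_iff.2 (norm_inner_le i x y)))
    exact ⟨c, mem_closedBall_zero_iff.1 hc, limit⟩
  choose c hc limit using exists_limit
  have limit_unique {x : E} {y : F} {d : ℂ} (hd : Tendsto (fun i => ⟪M i x, y⟫_ℂ) l (𝓝 d)) :
      c x y = d := tendsto_nhds_unique (limit x y) hd
  let form : E →L⋆[ℂ] F →L[ℂ] ℂ := LinearMap.mkContinuous₂
    (LinearMap.mk₂'ₛₗ (starRingEnd ℂ) (RingHom.id ℂ) c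
      (fun x x' y => limit_unique (by
        simpa only [map_add, inner_add_left] using (limit x y).add (limit x' y)))
      (fun a x y => limit_unique (by
        simpa only [map_smul, inner_smul_left, smul_eq_mul] using
          (limit x y).const_mul (starRingEnd ℂ a)))
      (fun x y y' => limit_unique (by
        simpa only [inner_add_right] using (limit x y).add (limit x y')))
      (fun a x y => limit_unique (by
        simpa only [inner_smul_right, RingHom.id_apply, smul_eq_mul] using
          (limit x y).const_mul a))) r hc
  refine ⟨((InnerProductSpace.toDual ℂ F).symm : StrongDual ℂ F →L⋆[ℂ] F).comp form, ?_,
    fun x y => ?_⟩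
  · refine opNorm_le_bound _ r_nonneg fun x => ?_
    change ‖(InnerProductSpace.toDual ℂ F).symm (form x)‖ ≤ r * ‖x‖
    rw [LinearIsometryEquiv.norm_map]
    exact form.le_of_opNorm_le (LinearMap.mkContinuous₂_norm_le _ r_nonneg _) x
  · change Tendsto _ _ (𝓝 ⟪(InnerProductSpace.toDual ℂ F).symm (form x), y⟫_ℂ)
    rw [InnerProductSpace.toDual_symm_apply]
    exact limit x y

end WeakLimit

section CircleL2

open MeasureTheory AddCircle
open scoped Real ENNReal

local instance fact_two_pi_pos : Fact (0 < 2 * π) := ⟨Real.two_pi_pos⟩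

/-- The vector-valued Lebesgue space `L²(𝕋, E)`, with `𝕋` realized as `ℝ / 2πℤ` with its
normalized Haar measure. -/
abbrev CircleL2 (E : Type*) [NormedAddCommGroup E] : Type _ := Lp E 2 (haarAddCircle (T := 2 * π))

instance {E : Type*} [NormedAddCommGroup E] [TopologicalSpace.SeparableSpace E] :
    TopologicalSpace.SeparableSpace (CircleL2 E) :=
  haveI := UniformSpace.secondCountable_of_separable E
  haveI : Fact ((2 : ℝ≥0∞) ≠ ⊤) := ⟨ENNReal.ofNat_ne_top⟩
  inferInstance

lemma integral_toCircle_eq_circleAverage {G : Type*} [NormedAddCommGroup G] [NormedSpace ℝ G]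
    (f : ℂ → G) :
    ∫ t : AddCircle (2 * π), f (toCircle t) ∂haarAddCircle = Real.circleAverage f 0 1 := by
  rw [integral_haarAddCircle, Real.circleAverage, ← AddCircle.intervalIntegral_preimage (2 * π) 0]
  simp [toCircle, circleMap]

variable {E F : Type*}
  [NormedAddCommGroup E] [InnerProductSpace ℂ E]
  [NormedAddCommGroup F] [InnerProductSpace ℂ F]

/-- The Laurent operator `L²(𝕋, E) → L²(𝕋, F)` of pointwise multiplication by the boundary values
of `ψ` on the unit circle. -/
def laurentOperator (ψ : ℂ → E →L[ℂ] F) (hψ : ContinuousOn ψ (sphere 0 1)) :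
    CircleL2 E →L[ℂ] CircleL2 F :=
  (ContinuousLinearMap.id ℂ (E →L[ℂ] F)).holderL haarAddCircle ∞ 2 2
    (ContinuousMap.toLp ∞ haarAddCircle ℂ
      ⟨fun t : AddCircle (2 * π) => ψ (toCircle t),
        hψ.comp_continuous (by fun_prop) fun t => (toCircle t).2⟩)

lemma coeFn_laurentOperator {ψ : ℂ → E →L[ℂ] F} (hψ : ContinuousOn ψ (sphere 0 1))
    (f : CircleL2 E) :
    laurentOperator ψ hψ f =ᵐ[haarAddCircle] fun t => ψ (toCircle t) (f t) := by
  let symbol : C(AddCircle (2 * π), E →L[ℂ] F) :=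
    ⟨fun t => ψ (toCircle t), hψ.comp_continuous (by fun_prop) fun t => (toCircle t).2⟩
  refine ((ContinuousLinearMap.id ℂ (E →L[ℂ] F)).coeFn_holder (r := 2)
    (ContinuousMap.toLp ∞ haarAddCircle ℂ symbol) f).trans ?_
  filter_upwards [ContinuousMap.coeFn_toLp (p := ∞) (𝕜 := ℂ) haarAddCircle symbol] with t ht
  rw [ht]
  rfl

lemma norm_laurentOperator_le {ψ : ℂ → E →L[ℂ] F} (hψ : ContinuousOn ψ (sphere 0 1)) {c : ℝ}
    (norm_le : ∀ ζ ∈ sphere (0 : ℂ) 1, ‖ψ ζ‖ ≤ c) : ‖laurentOperator ψ hψ‖ ≤ c := by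
  have c_nonneg : 0 ≤ c := (norm_nonneg _).trans (norm_le 1 (by simp))
  refine opNorm_le_bound _ c_nonneg fun f => Lp.norm_le_mul_norm_of_ae_le_mul ?_
  filter_upwards [coeFn_laurentOperator hψ f] with t ht
  rw [ht]
  exact le_of_opNorm_le _ (norm_le _ (toCircle t).2) _

lemma laurentOperator_laurentOperator_of_leftInverse {ψ : ℂ → E →L[ℂ] F} {φ : ℂ → F →L[ℂ] E}
    (hψ : ContinuousOn ψ (sphere 0 1)) (hφ : ContinuousOn φ (sphere 0 1))
    (h : ∀ ζ ∈ sphere (0 : ℂ) 1, Function.LeftInverse (φ ζ) (ψ ζ)) (f : CircleL2 E) :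
    laurentOperator φ hφ (laurentOperator ψ hψ f) = f := by
  refine Lp.ext ?_
  filter_upwards [coeFn_laurentOperator hφ (laurentOperator ψ hψ f), coeFn_laurentOperator hψ f]
    with t h_outer h_inner
  rw [h_outer, h_inner, h _ (toCircle t).2]

lemma norm_laurentOperator_apply {ψ : ℂ → E →L[ℂ] F} (hψ : ContinuousOn ψ (sphere 0 1))
    (norm_eq : ∀ ζ ∈ sphere (0 : ℂ) 1, ∀ x, ‖ψ ζ x‖ = ‖x‖) (f : CircleL2 E) :
    ‖laurentOperator ψ hψ f‖ = ‖f‖ := by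
  refine congrArg ENNReal.toReal (eLpNorm_congr_norm_ae ?_)
  filter_upwards [coeFn_laurentOperator hψ f] with t ht
  rw [ht, norm_eq _ (toCircle t).2]

variable (E) in
lemma continuousOn_inv_smul_id :
    ContinuousOn (fun ζ : ℂ => ζ⁻¹ • ContinuousLinearMap.id ℂ E) (sphere 0 1) :=
  (continuousOn_inv₀.mono fun _ hζ => ne_of_mem_sphere hζ one_ne_zero).smul continuousOn_const

variable (E) in
/-- The backward bilateral shift on `L²(𝕋, E)`, multiplication by `ζ⁻¹`. -/
def circleShift : CircleL2 E ≃ₗᵢ[ℂ] CircleL2 E :=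
  LinearIsometryEquiv.ofSurjective
    { (laurentOperator _ (continuousOn_inv_smul_id E)).toLinearMap with
      norm_map' := norm_laurentOperator_apply _ fun ζ hζ x => by
        rw [smul_apply, norm_smul, norm_inv, mem_sphere_zero_iff_norm.1 hζ, inv_one, one_mul,
          id_apply] } <|
    Function.RightInverse.surjective <|
      laurentOperator_laurentOperator_of_leftInverse
        (ψ := fun ζ => ζ • ContinuousLinearMap.id ℂ E) (by fun_prop) (continuousOn_inv_smul_id E)
        fun _ hζ x => inv_smul_smul₀ (ne_of_mem_sphere hζ one_ne_zero) x

lemma coeFn_circleShift (f : CircleL2 E) :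
    circleShift E f =ᵐ[haarAddCircle] fun t => (toCircle t : ℂ)⁻¹ • f t :=
  coeFn_laurentOperator (continuousOn_inv_smul_id E) f

lemma coeFn_circleShift_pow (n : ℕ) (f : CircleL2 E) :
    (circleShift E ^ n) f =ᵐ[haarAddCircle] fun t => ((toCircle t : ℂ)⁻¹) ^ n • f t := by
  induction n with
  | zero => simp
  | succ n ih =>
    filter_upwards [coeFn_circleShift ((circleShift E ^ n) f), ih] with t h h'
    rw [pow_succ', pow_succ', mul_smul, ← h', ← h]
    rfl

lemma laurentOperator_circleShift {ψ : ℂ → E →L[ℂ] F} (hψ : ContinuousOn ψ (sphere 0 1))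
    (f : CircleL2 E) :
    laurentOperator ψ hψ (circleShift E f) = circleShift F (laurentOperator ψ hψ f) := by
  refine Lp.ext ?_
  filter_upwards [coeFn_laurentOperator hψ (circleShift E f), coeFn_circleShift f,
    coeFn_circleShift (laurentOperator ψ hψ f), coeFn_laurentOperator hψ f] with t h₁ h₂ h₃ h₄
  rw [h₁, h₂, h₃, h₄, map_smul]

/-- The embedding of `E` into `L²(𝕋, E)` as the constant functions. -/
def circleConst (E : Type*) [NormedAddCommGroup E] [InnerProductSpace ℂ E] :
    E →ₗᵢ[ℂ] CircleL2 E where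
  toLinearMap := Lp.constₗ 2 haarAddCircle ℂ
  norm_map' a := by
    rw [Lp.constₗ_apply, Lp.norm_const _ _ _ two_ne_zero, probReal_univ, Real.one_rpow, mul_one]

lemma coeFn_circleConst (a : E) : circleConst E a =ᵐ[haarAddCircle] fun _ => a :=
  Lp.coeFn_const 2 haarAddCircle a

lemma inner_circleShift_pow_circleConst (n : ℕ) (a : E) {h : ℂ → E} {y : CircleL2 E}
    (hy : y =ᵐ[haarAddCircle] fun t => h (toCircle t)) :
    ⟪(circleShift E ^ n) (circleConst E a), y⟫_ℂ =
      Real.circleAverage (fun ζ => ζ ^ n * ⟪a, h ζ⟫_ℂ) 0 1 := by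
  rw [← integral_toCircle_eq_circleAverage, L2.inner_def]
  refine integral_congr_ae ?_
  filter_upwards [coeFn_circleShift_pow n (circleConst E a), coeFn_circleConst a, hy]
    with t h_shift h_const h_y
  rw [h_shift, h_const, h_y, inner_smul_left, map_pow, map_inv₀, ← Circle.coe_inv_eq_conj,
    Circle.coe_inv, inv_inv]

lemma inner_circleShift_pow_succ_circleConst (n : ℕ) (a : E) {h : ℂ → E} {y : CircleL2 E}
    (hh : DiffContOnCl ℂ h (ball 0 1))
    (hy : y =ᵐ[haarAddCircle] fun t => h (toCircle t)) :
    ⟪(circleShift E ^ (n + 1)) (circleConst E a), y⟫_ℂ = 0 := by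
  have analytic : DiffContOnCl ℂ (fun ζ => ζ ^ (n + 1) * ⟪a, h ζ⟫_ℂ) (ball 0 |1|) := by
    rw [abs_one]
    exact (differentiable_id.pow (n + 1)).diffContOnCl.smul
      ((innerSL ℂ a).differentiable.comp_diffContOnCl hh)
  rw [inner_circleShift_pow_circleConst _ _ hy, analytic.circleAverage, zero_pow n.succ_ne_zero,
    zero_mul]

lemma forwardOrthogonal_circleShift_circleConst :
    ForwardOrthogonal (circleShift E) (circleConst E) (circleConst E) := fun n a b =>
  inner_circleShift_pow_succ_circleConst n a diffContOnCl_const (coeFn_circleConst b)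

lemma coeFn_laurentOperator_circleConst {ψ : ℂ → E →L[ℂ] F}
    (hψ : ContinuousOn ψ (sphere 0 1)) (b : E) :
    laurentOperator ψ hψ (circleConst E b) =ᵐ[haarAddCircle] fun t => ψ (toCircle t) b := by
  filter_upwards [coeFn_laurentOperator hψ (circleConst E b), coeFn_circleConst b] with t h h'
  rw [h, h']

lemma forwardOrthogonal_laurentOperator_circleConst {ψ : ℂ → E →L[ℂ] F}
    (hψ : DiffContOnCl ℂ ψ (ball 0 1)) (h_sphere : ContinuousOn ψ (sphere 0 1)) :
    ForwardOrthogonal (circleShift F) (circleConst F)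
      (laurentOperator ψ h_sphere ∘ circleConst E) := fun n a b =>
  inner_circleShift_pow_succ_circleConst n a
    ((apply ℂ F b).differentiable.comp_diffContOnCl hψ)
    (coeFn_laurentOperator_circleConst h_sphere b)

variable [CompleteSpace E]

lemma coeFn_inverse_one_sub_smul_circleShift {z : ℂ} (hz : ‖z‖ < 1) (b : E) :
    Ring.inverse (1 - z • (circleShift E : CircleL2 E →L[ℂ] CircleL2 E)) (circleConst E b)
      =ᵐ[haarAddCircle] fun t => ((toCircle t : ℂ) / (toCircle t - z)) • b := by
  set y := Ring.inverse (1 - z • (circleShift E : CircleL2 E →L[ℂ] CircleL2 E)) (circleConst E b)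
  have resolvent_eq : y - z • circleShift E y = circleConst E b :=
    DFunLike.congr_fun (Ring.mul_inverse_cancel _
      (isUnit_one_sub_smul_linearIsometryEquiv (circleShift E) hz)) (circleConst E b)
  have coeFn_sub := Lp.coeFn_sub y (z • circleShift E y)
  rw [resolvent_eq] at coeFn_sub
  filter_upwards [coeFn_sub, Lp.coeFn_smul z (circleShift E y), coeFn_circleShift y,
    coeFn_circleConst b] with t h_sub h_smul h_shift h_const
  have ne_z : (toCircle t : ℂ) - z ≠ 0 := sub_ne_zero.2 fun h =>
    hz.ne (h ▸ Circle.norm_coe (toCircle t))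
  rw [h_const, Pi.sub_apply, h_smul, Pi.smul_apply, h_shift] at h_sub
  rw [h_sub]
  have ne_zero : (toCircle t : ℂ) ≠ 0 := Circle.coe_ne_zero _
  match_scalars
  field_simp

lemma inner_circleConst_laurentOperator_inverse {ψ : ℂ → E →L[ℂ] F}
    (hψ : DiffContOnCl ℂ ψ (ball 0 1)) (h_sphere : ContinuousOn ψ (sphere 0 1))
    {z : ℂ} (hz : ‖z‖ < 1) (a : F) (b : E) :
    ⟪circleConst F a, laurentOperator ψ h_sphere (Ring.inverse
      (1 - z • (circleShift E : CircleL2 E →L[ℂ] CircleL2 E)) (circleConst E b))⟫_ℂ =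
      ⟪a, ψ z b⟫_ℂ := by
  set y := Ring.inverse (1 - z • (circleShift E : CircleL2 E →L[ℂ] CircleL2 E)) (circleConst E b)
    with hy
  have coeFn_eq : laurentOperator ψ h_sphere y =ᵐ[haarAddCircle]
      fun t => ((toCircle t : ℂ) / (toCircle t - z)) • ψ (toCircle t) b := by
    filter_upwards [coeFn_laurentOperator h_sphere y,
      coeFn_inverse_one_sub_smul_circleShift hz b] with t h h'
    rw [h, hy, h', map_smul]
  have analytic : DiffContOnCl ℂ (fun ζ => ⟪a, ψ ζ b⟫_ℂ) (ball 0 |1|) := by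
    rw [abs_one]
    exact ((innerSL ℂ a).comp (apply ℂ F b)).differentiable.comp_diffContOnCl hψ
  have cauchy := analytic.circleAverage_smul_div (w := z) (by simpa using hz)
  simp only [sub_zero, smul_eq_mul] at cauchy
  have inner_eq := inner_circleShift_pow_circleConst 0 a (h := fun ζ => (ζ / (ζ - z)) • ψ ζ b)
    coeFn_eq
  simp only [pow_zero, one_mul, inner_smul_right] at inner_eq
  exact inner_eq.trans cauchy

lemma diffContOnCl_comp_const_mul {G : Type*} [NormedAddCommGroup G] [NormedSpace ℂ G]
    {φ : ℂ → G} (hφ : DifferentiableOn ℂ φ (ball 0 1)) {r : ℂ} (hr : ‖r‖ < 1) :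
    DiffContOnCl ℂ (fun ζ => φ (r * ζ)) (ball 0 1) := by
  refine (hφ.comp (differentiable_fun_id.const_mul r).differentiableOn
    (Set.mapsTo_preimage _ _)).diffContOnCl_ball fun ζ hζ => ?_
  rw [Set.mem_preimage, mem_ball_zero_iff, norm_mul]
  exact mul_lt_one_of_nonneg_of_lt_one_left (norm_nonneg r) hr (mem_closedBall_zero_iff.1 hζ)

theorem exists_shift_intertwining_contraction [CompleteSpace F] {φ : ℂ → E →L[ℂ] F}
    (hφ : DifferentiableOn ℂ φ (ball 0 1)) (norm_le : ∀ z ∈ ball (0 : ℂ) 1, ‖φ z‖ ≤ 1) :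
    ∃ L : CircleL2 E →L[ℂ] CircleL2 F, ‖L‖ ≤ 1 ∧
      (∀ f, L (circleShift E f) = circleShift F (L f)) ∧
      ForwardOrthogonal (circleShift F) (circleConst F) (L ∘ circleConst E) ∧
      ∀ z : ℂ, ‖z‖ < 1 → ∀ a b, ⟪circleConst F a, L (Ring.inverse
        (1 - z • (circleShift E : CircleL2 E →L[ℂ] CircleL2 E)) (circleConst E b))⟫_ℂ =
          ⟪a, φ z b⟫_ℂ := by
  obtain ⟨r, -, hr, hr_tendsto⟩ := exists_seq_strictMono_tendsto' (zero_lt_one' ℝ)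
  have norm_r (j : ℕ) : ‖(r j : ℂ)‖ < 1 := by
    rw [Complex.norm_of_nonneg (hr j).1.le]
    exact (hr j).2
  have dilation (j : ℕ) : DiffContOnCl ℂ (fun ζ => φ (r j * ζ)) (ball 0 1) :=
    diffContOnCl_comp_const_mul hφ (norm_r j)
  have continuous_boundary (j : ℕ) : ContinuousOn (fun ζ => φ (r j * ζ)) (sphere 0 1) :=
    (dilation j).continuousOn_ball.mono sphere_subset_closedBall
  let M (j : ℕ) : CircleL2 E →L[ℂ] CircleL2 F := laurentOperator _ (continuous_boundary j)
  have norm_M (j : ℕ) : ‖M j‖ ≤ 1 := norm_laurentOperator_le _ fun ζ hζ =>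
    norm_le _ (by simpa only [mem_ball_zero_iff, norm_mul, mem_sphere_zero_iff_norm.1 hζ, mul_one]
      using norm_r j)
  obtain ⟨L, norm_L, limit⟩ := exists_tendsto_inner_of_norm_le (.of atTop) norm_M
  have inner_L {x : CircleL2 E} {y : CircleL2 F} {u : ℕ → ℂ} {c : ℂ}
      (h : ∀ j, ⟪y, M j x⟫_ℂ = u j) (hu : Tendsto u atTop (𝓝 c)) : ⟪y, L x⟫_ℂ = c := by
    have limit' := (Complex.continuous_conj.tendsto _).comp (limit x y)
    simp only [Function.comp_def, inner_conj_symm, h] at limit'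
    exact tendsto_nhds_unique limit' (hu.mono_left (Ultrafilter.of_le _))
  refine ⟨L, norm_L, fun f => ext_inner_right ℂ fun y => ?_,
    fun n a b => inner_L (fun j => forwardOrthogonal_laurentOperator_circleConst (dilation j)
      (continuous_boundary j) n a b) tendsto_const_nhds,
    fun z hz a b => inner_L (fun j => inner_circleConst_laurentOperator_inverse (dilation j)
      (continuous_boundary j) hz a b) ?_⟩
  · refine tendsto_nhds_unique (limit (circleShift E f) y) ?_
    rw [← (circleShift F).apply_symm_apply y, LinearIsometryEquiv.inner_map_map]
    convert limit f ((circleShift F).symm y) using 2 with j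
    rw [laurentOperator_circleShift, LinearIsometryEquiv.inner_map_map]
  · have r_mul_tendsto : Tendsto (fun j => (r j : ℂ) * z) atTop (𝓝 z) := by
      simpa using ((Complex.continuous_ofReal.tendsto 1).comp hr_tendsto).mul_const z
    have continuous_inner : ContinuousAt (fun w => ⟪a, φ w b⟫_ℂ) z :=
      ((innerSL ℂ a).comp (apply ℂ F b)).continuous.continuousAt.comp
        (hφ.continuousOn.continuousAt (isOpen_ball.mem_nhds (mem_ball_zero_iff.2 hz)))
    exact continuous_inner.tendsto.comp r_mul_tendsto

theorem exists_scatteringSystem_scatteringFunction_eq [CompleteSpace F] {φ : ℂ → E →L[ℂ] F}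
    (hφ : DifferentiableOn ℂ φ (ball 0 1)) (norm_le : ∀ z ∈ ball (0 : ℂ) 1, ‖φ z‖ ≤ 1) :
    ∃ S : ScatteringSystem E F (WithLp 2 (CircleL2 F × CircleL2 E)),
      ∀ z : ℂ, ‖z‖ < 1 → S.scatteringFunction z = φ z := by
  obtain ⟨L, norm_L, intertwines, causal, symbol⟩ :=
    exists_shift_intertwining_contraction hφ norm_le
  obtain ⟨S, hS⟩ := exists_scatteringSystem_of_contraction norm_L intertwines
    forwardOrthogonal_circleShift_circleConst forwardOrthogonal_circleShift_circleConst causal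
  exact ⟨S, fun z hz => ContinuousLinearMap.ext fun b => ext_inner_left ℂ fun a =>
    (hS z hz a b).trans (symbol z hz a b)⟩

end CircleL2

lemma exists_eq_smul_of_norm_le_one {G : Type*} [NormedAddCommGroup G] [NormedSpace ℂ G]
    [CompleteSpace G] {θ : ℂ → G} (hθ : DifferentiableOn ℂ θ (ball 0 1))
    (norm_le : ∀ z ∈ ball (0 : ℂ) 1, ‖θ z‖ ≤ 1) (map_zero : θ 0 = 0) :
    ∃ φ : ℂ → G, DifferentiableOn ℂ φ (ball 0 1) ∧ (∀ z ∈ ball (0 : ℂ) 1, ‖φ z‖ ≤ 1) ∧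
      ∀ z, θ z = z • φ z := by
  refine ⟨dslope θ 0,
    (Complex.differentiableOn_dslope (ball_mem_nhds 0 zero_lt_one)).2 hθ, fun z hz => ?_,
    fun z => ?_⟩
  · refine (Complex.norm_dslope_le_div_of_mapsTo_ball hθ (fun w hw => ?_) hz).trans_eq (div_one 1)
    rw [map_zero, mem_closedBall_zero_iff]
    exact norm_le w hw
  · simpa only [sub_zero, map_zero] using (sub_smul_dslope θ 0 z).symm

/-- a holomorphic `θ : D → [N⁻, N⁺]` is the transfer function of some
one-parametric conservative scattering LSDS if and only if `θ ∈ S⁰(N⁻, N⁺)`, i.e. `θ` is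
contractive-valued on the open unit disc and `θ(0) = 0`. -/
theorem transfer_functions_of_conservative_systems_eq_S0.{u}
    {Nm Np : Type u}
    [NormedAddCommGroup Nm] [InnerProductSpace ℂ Nm] [CompleteSpace Nm]
    [TopologicalSpace.SeparableSpace Nm]
    [NormedAddCommGroup Np] [InnerProductSpace ℂ Np] [CompleteSpace Np]
    [TopologicalSpace.SeparableSpace Np]
    (θ : ℂ → (Nm →L[ℂ] Np))
    (hθ : DifferentiableOn ℂ θ (ball (0 : ℂ) 1)) :
    (∃ (X : Type u) (_ : NormedAddCommGroup X) (_ : InnerProductSpace ℂ X)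
      (_ : CompleteSpace X) (_ : TopologicalSpace.SeparableSpace X)
      (A : X →L[ℂ] X) (B : Nm →L[ℂ] X) (C : X →L[ℂ] Np) (D : Nm →L[ℂ] Np),
      IsUnitaryOp (blockOp A B C D) ∧
        ∀ z ∈ ball (0 : ℂ) 1, IsUnit ((1 : X →L[ℂ] X) - z • A) ∧
          θ z = z • D + (z • C) ∘L (Ring.inverse (1 - z • A)) ∘L (z • B)) ↔
    ((∀ z ∈ ball (0 : ℂ) 1, ‖θ z‖ ≤ 1) ∧ θ 0 = 0) := by
  constructor
  · rintro ⟨X, _, _, _, _, A, B, C, D, unitary, realizes⟩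
    refine ⟨fun z hz => ?_, ?_⟩
    · rw [(realizes z hz).2]
      exact unitary.norm_transferFunction_le_one (mem_ball_zero_iff.1 hz)
    · simpa using (realizes 0 (mem_ball_self one_pos)).2
  · rintro ⟨norm_le, map_zero⟩
    obtain ⟨φ, hφ, norm_φ, smul_φ⟩ := exists_eq_smul_of_norm_le_one hθ norm_le map_zero
    obtain ⟨S, hS⟩ := exists_scatteringSystem_scatteringFunction_eq hφ norm_φ
    obtain ⟨A, B, C, D, unitary, transfer_eq⟩ := S.exists_conservative_realization
    refine ⟨S.stateSpace, inferInstance, inferInstance, inferInstance, inferInstance, A, B, C, D,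
      unitary, fun z hz => ?_⟩
    have norm_z : ‖z‖ < 1 := mem_ball_zero_iff.1 hz
    refine ⟨unitary.isUnit_one_sub_smul norm_z, ?_⟩
    rw [smul_φ, ← hS z norm_z, ← transfer_eq z norm_z, transferFunction]
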